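/- arXiv:1801.02228 — 3 statements merged into one kernel-verified Lean document; each statement's English description precedes it below -/
import Mathlib

section
/- Let n, k be integers with n ≢ 1 (mod 4), k ≠ 0, and the 2-adic valuation v₂(k) not divisible by 3. Suppose the polynomial X³ − (n³ − 2n² + 3n − 3)X² − n²X − 1 is irreducible over ℚ. Then the Thue equation x³ − (n³ − 2n² + 3n − 3)x²y − n²xy² − y³ = k has no solution in integers x, y. -/
open Polynomial

/-!
Let `F(x, y)` be the cubic form on the left-hand side. The theorem holds because `v₂(F(x, y))` is
divisible by `3` whenever `F(x, y) ≠ 0`. If `x` and `y` are both even, then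
`F(x, y) = 8 F(x/2, y/2)`, so by descent at least one of them may be assumed odd
(`three_dvd_padicValInt_form`). For such a pair, `form_cases` shows that `F(x, y)` is either odd
or `8` times an odd number:

* if `n` is even, `F ≡ x³ + x²y + y³ (mod 2)`, which has no nontrivial zero mod `2`;
* if `n ≡ 3 (mod 4)`, then `F ≡ (x + y)³ (mod 2)`, so `F` is odd unless `x` and `y` are both odd;
  in that case, writing `x = y + 2z`, one finds `F = 8 G(z, y)` with
  `G ≡ z³ + zy² + y³ (mod 2)`, which is odd because `y` is.
-/

/-- The cubic form of Washington's family. -/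
def washingtonForm (n x y : ℤ) : ℤ :=
  x ^ 3 - (n ^ 3 - 2 * n ^ 2 + 3 * n - 3) * x ^ 2 * y - n ^ 2 * x * y ^ 2 - y ^ 3

lemma padicValInt_two_eight_mul {a : ℤ} (ha : a ≠ 0) :
    padicValInt 2 (8 * a) = 3 + padicValInt 2 a := by
  have h8 : padicValInt 2 (8 : ℤ) = 3 := by
    have : padicValNat 2 (2 ^ 3) = 3 := padicValNat.prime_pow 3
    simpa [padicValInt] using this
  rw [padicValInt.mul (by norm_num) ha, h8]

lemma padicValInt_two_odd {a : ℤ} (ha : Odd a) : padicValInt 2 a = 0 :=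
  padicValInt.eq_zero_of_not_dvd (by
    rw [← Int.not_even_iff_odd, even_iff_two_dvd] at ha
    exact_mod_cast ha)

lemma form_cases (n x y : ℤ) (hn : n % 4 ≠ 1) (hxy : ¬ (Even x ∧ Even y)) :
    Odd (washingtonForm n x y) ∨ ∃ t, Odd t ∧ washingtonForm n x y = 8 * t := by
  unfold washingtonForm
  have e3 : ¬ Even (3 : ℤ) := by decide
  rcases Int.even_or_odd n with h | h
  · left
    rcases Int.even_or_odd x with hx | hx <;> rcases Int.even_or_odd y with hy | hy <;>
      simp_all [← Int.not_even_iff_odd, parity_simps]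
  · by_cases hodd : Odd x ∧ Odd y
    · right
      obtain ⟨m, rfl⟩ : ∃ m, n = 4 * m + 3 := ⟨n / 4, by grind⟩
      obtain ⟨z, rfl⟩ : ∃ z, x = y + 2 * z := ⟨(x - y) / 2, by grind⟩
      have hy := hodd.2
      -- `G(z, y)` for `n = 4m + 3`.
      refine ⟨z ^ 3 - (32 * m ^ 3 + 56 * m ^ 2 + 36 * m + 6) * z ^ 2 * y
        - (32 * m ^ 3 + 60 * m ^ 2 + 42 * m + 9) * z * y ^ 2
        - (2 * m + 1) * (4 * m ^ 2 + 6 * m + 3) * y ^ 3, ?_, by ring⟩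
      have e4 : Even (4 : ℤ) := by decide
      have e6 : Even (6 : ℤ) := by decide
      have e9 : ¬ Even (9 : ℤ) := by decide
      have e32 : Even (32 : ℤ) := by decide
      have e36 : Even (36 : ℤ) := by decide
      have e42 : Even (42 : ℤ) := by decide
      have e56 : Even (56 : ℤ) := by decide
      have e60 : Even (60 : ℤ) := by decide
      rcases Int.even_or_odd z with hz | hz <;>
        simp_all [← Int.not_even_iff_odd, parity_simps]
    · left
      rcases Int.even_or_odd x with hx | hx <;> rcases Int.even_or_odd y with hy | hy <;>
        simp_all [← Int.not_even_iff_odd, parity_simps]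

/-- Descent on the pair `(x, y)`: common factors of `2` change the valuation by multiples
of `3`. -/
lemma three_dvd_padicValInt_form (n : ℤ) (hn : n % 4 ≠ 1) (N : ℕ) :
    ∀ x y : ℤ, x.natAbs + y.natAbs ≤ N → washingtonForm n x y ≠ 0 →
      3 ∣ padicValInt 2 (washingtonForm n x y) := by
  induction N with
  | zero =>
    intro x y h h0
    obtain ⟨rfl, rfl⟩ : x = 0 ∧ y = 0 := by omega
    simp [washingtonForm] at h0
  | succ N ih =>
    intro x y h h0
    by_cases hxy : Even x ∧ Even y
    · obtain ⟨⟨a, rfl⟩, ⟨b, rfl⟩⟩ := hxy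
      have e : washingtonForm n (a + a) (b + b) = 8 * washingtonForm n a b := by
        unfold washingtonForm; ring
      rw [e] at h0 ⊢
      have h1 : washingtonForm n a b ≠ 0 := right_ne_zero_of_mul h0
      have hab : ¬ (a = 0 ∧ b = 0) := by
        rintro ⟨rfl, rfl⟩
        simp [washingtonForm] at h1
      rw [padicValInt_two_eight_mul h1]
      exact (Nat.dvd_add_right (dvd_refl 3)).2 (ih a b (by omega) h1)
    · rcases form_cases n x y hn hxy with ho | ⟨t, ht, e⟩
      · simp [padicValInt_two_odd ho]
      · rw [e] at h0 ⊢
        rw [padicValInt_two_eight_mul (right_ne_zero_of_mul h0), padicValInt_two_odd ht]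

theorem stmt_3 (n k : ℤ) (hn : ¬ (n % 4 = 1 % 4)) (hk : k ≠ 0)
    (hv : ¬ (3 ∣ padicValInt 2 k))
    (hirr : Irreducible (X ^ 3 - C ((n : ℚ) ^ 3 - 2 * n ^ 2 + 3 * n - 3) * X ^ 2
      - C ((n : ℚ) ^ 2) * X - 1)) :
    ¬ ∃ x y : ℤ, x ^ 3 - (n ^ 3 - 2 * n ^ 2 + 3 * n - 3) * x ^ 2 * y - n ^ 2 * x * y ^ 2
      - y ^ 3 = k := by
  rintro ⟨x, y, rfl⟩
  exact hv (three_dvd_padicValInt_form n hn _ x y le_rfl hk)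
end

section
/- Let a, b, c, d, k be integers such that a is odd, bc + d is odd, k ≠ 0, and the 2-adic valuation v₂(k) is not divisible by 3. Suppose the polynomial aX³ + bX² + cX + d is irreducible over ℚ and its discriminant is a perfect square. Then the only integer solution (x, y, z) of the homogeneous equation ax³ + bx²y + cxy² + dy³ = kz³ is (x, y, z) = (0, 0, 0). -/
/-!
Since `a` and `bc + d` are odd, the cubic reduces modulo 2 to one of `X³ + 1`, `X³ + X² + X`,
`X³ + X² + 1`, `X³ + X + 1`. For the first two, each a linear factor times `X² + X + 1`, the
discriminant is `5` modulo 8, hence not a square. So exactly one of `b`, `c` is even and `d` is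
odd, i.e. the cubic is irreducible modulo 2 (`parity_of_disc_sq`). The binary form
`F(x, y) = ax³ + bx²y + cxy² + dy³` is then odd unless `x` and `y` are both even (`odd_form`).
For `(x, y) ≠ (0, 0)` with `g = gcd(x, y)`, this makes `F(x, y)` equal to `g³` times an odd
number, so `F(x, y) ≠ 0` and its 2-adic valuation is a multiple of 3. The valuation of `kz³` is
not, so `(x, y) = (0, 0)`, and then `z = 0`.
-/

open Polynomial

/-- The parity pattern says that the cubic is irreducible modulo 2. The discriminant is `5` modulo
8 in the two excluded patterns. -/
lemma parity_of_disc_sq (a b c d s : ℤ) (ha : Odd a) (hbcd : Odd (b * c + d))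
    (hs : b ^ 2 * c ^ 2 - 4 * a * c ^ 3 - 4 * b ^ 3 * d - 27 * a ^ 2 * d ^ 2
      + 18 * a * b * c * d = s ^ 2) :
    Odd d ∧ (Odd b ∧ Even c ∨ Even b ∧ Odd c) := by
  have hsquares : ∀ t : ZMod 8, t ^ 2 = 0 ∨ t ^ 2 = 1 ∨ t ^ 2 = 4 := by decide
  have h8 := congrArg (Int.cast : ℤ → ZMod 8) hs
  push_cast at h8
  have hs8 := hsquares s
  rw [← h8] at hs8
  have hpar : Even (b * c) ↔ Odd d := by
    rw [add_comm, Int.odd_add] at hbcd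
    exact hbcd.symm
  rw [Int.even_mul] at hpar
  rcases Int.even_or_odd b with hb | hb <;> rcases Int.even_or_odd c with hc | hc
  · exfalso
    obtain ⟨d, rfl⟩ := hpar.1 (Or.inl hb)
    obtain ⟨a, rfl⟩ := ha
    obtain ⟨b, rfl⟩ := hb
    obtain ⟨c, rfl⟩ := hc
    push_cast at hs8
    clear * - hs8
    generalize (a : ZMod 8) = a, (b : ZMod 8) = b, (c : ZMod 8) = c, (d : ZMod 8) = d at hs8
    revert a b c d
    decide +kernel
  · exact ⟨hpar.1 (Or.inl hb), Or.inr ⟨hb, hc⟩⟩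
  · exact ⟨hpar.1 (Or.inr hc), Or.inl ⟨hb, hc⟩⟩
  · exfalso
    have hd : Even d := by
      simp only [← Int.not_even_iff_odd] at *
      tauto
    obtain ⟨a, rfl⟩ := ha
    obtain ⟨b, rfl⟩ := hb
    obtain ⟨c, rfl⟩ := hc
    obtain ⟨d, rfl⟩ := hd
    push_cast at hs8
    clear * - hs8
    generalize (a : ZMod 8) = a, (b : ZMod 8) = b, (c : ZMod 8) = c, (d : ZMod 8) = d at hs8
    revert a b c d
    decide +kernel

lemma odd_form (a b c d x y : ℤ) (ha : Odd a) (hd : Odd d)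
    (hbc : Odd b ∧ Even c ∨ Even b ∧ Odd c) (hxy : ¬ (Even x ∧ Even y)) :
    Odd (a * x ^ 3 + b * x ^ 2 * y + c * x * y ^ 2 + d * y ^ 3) := by
  simp only [← Int.not_even_iff_odd] at *
  simp only [Int.even_add, Int.even_mul, Int.even_pow]
  tauto

theorem stmt_6 (a b c d k : ℤ) (ha : Odd a) (hbcd : Odd (b * c + d)) (hk : k ≠ 0)
    (hv : ¬ (3 ∣ padicValInt 2 k))
    (hirr : Irreducible (C (a : ℚ) * X ^ 3 + C (b : ℚ) * X ^ 2 + C (c : ℚ) * X + C (d : ℚ)))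
    (hsq : ∃ s : ℤ, b ^ 2 * c ^ 2 - 4 * a * c ^ 3 - 4 * b ^ 3 * d - 27 * a ^ 2 * d ^ 2
      + 18 * a * b * c * d = s ^ 2) :
    ∀ x y z : ℤ, a * x ^ 3 + b * x ^ 2 * y + c * x * y ^ 2 + d * y ^ 3 = k * z ^ 3 →
      x = 0 ∧ y = 0 ∧ z = 0 := by
  obtain ⟨s, hs⟩ := hsq
  obtain ⟨hd, hbc⟩ := parity_of_disc_sq a b c d s ha hbcd hs
  intro x y z h
  by_cases h0 : x = 0 ∧ y = 0
  · obtain ⟨rfl, rfl⟩ := h0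
    simpa [hk] using h.symm
  exfalso
  have hpos : 0 < Int.gcd x y := by
    rw [Int.gcd_pos_iff]
    tauto
  obtain ⟨u, v, huv, hx, hy⟩ := Int.exists_gcd_one hpos
  have hg : (Int.gcd x y : ℤ) ≠ 0 := by exact_mod_cast hpos.ne'
  generalize (Int.gcd x y : ℤ) = g at hx hy hg
  subst hx hy
  have hodd := odd_form a b c d u v ha hd hbc (by
    rintro ⟨hu, hv⟩
    have := Int.dvd_coe_gcd hu.two_dvd hv.two_dvd
    rw [huv] at this
    norm_num at this)
  generalize hF : a * u ^ 3 + b * u ^ 2 * v + c * u * v ^ 2 + d * v ^ 3 = F at hodd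
  have hF0 : F ≠ 0 := by
    rintro rfl
    simp at hodd
  have hFg : F * g ^ 3 = k * z ^ 3 := by
    rw [← h, ← hF]
    ring
  have hz : z ≠ 0 := by
    rintro rfl
    simp [hF0, hg] at hFg
  have hvF : padicValInt 2 F = 0 :=
    padicValInt.eq_zero_of_not_dvd (by
      rw [Nat.cast_ofNat, ← even_iff_two_dvd]
      exact Int.not_even_iff_odd.2 hodd)
  have hcube : ∀ w : ℤ, w ≠ 0 → padicValInt 2 (w ^ 3) = 3 * padicValInt 2 w := by
    intro w hw
    rw [pow_succ, pow_two, padicValInt.mul (mul_ne_zero hw hw) hw, padicValInt.mul hw hw]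
    ring
  have hval := congrArg (padicValInt 2) hFg
  rw [padicValInt.mul hF0 (pow_ne_zero 3 hg), padicValInt.mul hk (pow_ne_zero 3 hz),
    hcube g hg, hcube z hz, hvF] at hval
  omega
end

section
/- Let a, b, c, d, t be integers such that a is odd, bc + d is odd, and the 2-adic valuation of t equals 1 (i.e., t is twice an odd integer). Suppose the polynomial aX³ + bX² + cX + d + t is irreducible over ℚ and its discriminant is a perfect square. Then the equation ax³ + bx² + cx + d = ty² has no solution in integers x, y. -/
open Polynomial

/-!
The argument is purely 2-adic. Put `D = d + t`, which has the parity of `d`. If `b` and `c` had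
different parities, `d` would be odd, and then `a x³ + b x² + c x + d` would be odd for every `x`,
while `t y²` is even. So `b` and `c` have the same parity, and the cubic with constant term `D` is
modulo 2 a linear factor times `X² + X + 1`. Its discriminant is then `5` modulo `8` (lemmas
`disc_of_even` and `disc_of_odd`), hence not a square.
-/

lemma odd_sq_eq {n : ℤ} (hn : Odd n) : ∃ k, n ^ 2 = 8 * k + 1 := by
  obtain ⟨m, rfl⟩ := hn
  obtain ⟨r, hr⟩ := Int.even_mul_succ_self m
  exact ⟨r, by linear_combination 4 * hr⟩

lemma sq_ne_five_mod_eight (s k : ℤ) : s ^ 2 ≠ 8 * k + 5 := by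
  intro h
  rcases Int.even_or_odd s with ⟨m, rfl⟩ | hs
  · have : (m + m) ^ 2 = 4 * m ^ 2 := by ring
    omega
  · obtain ⟨l, hl⟩ := odd_sq_eq hs
    omega

lemma disc_of_even {a b c D : ℤ} (ha : Odd a) (hD : Odd D) (hb : Even b) (hc : Even c) :
    ∃ k, b ^ 2 * c ^ 2 - 4 * a * c ^ 3 - 4 * b ^ 3 * D - 27 * a ^ 2 * D ^ 2
      + 18 * a * b * c * D = 8 * k + 5 := by
  obtain ⟨k, hk⟩ := odd_sq_eq (ha.mul hD)
  obtain ⟨p, rfl⟩ := hb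
  obtain ⟨q, rfl⟩ := hc
  exact ⟨2 * p ^ 2 * q ^ 2 - 4 * a * q ^ 3 - 4 * p ^ 3 * D - 27 * k - 4 + 9 * a * p * q * D,
    by linear_combination (-27) * hk⟩

lemma disc_of_odd {a b c D : ℤ} (ha : Odd a) (hD : Even D) (hb : Odd b) (hc : Odd c) :
    ∃ k, b ^ 2 * c ^ 2 - 4 * a * c ^ 3 - 4 * b ^ 3 * D - 27 * a ^ 2 * D ^ 2
      + 18 * a * b * c * D = 8 * k + 5 := by
  obtain ⟨k, hk⟩ := odd_sq_eq (hb.mul hc)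
  obtain ⟨m, hm⟩ := ha.mul (hc.pow (n := 3))
  obtain ⟨e, rfl⟩ := hD
  -- With `D = 2e`, the last two terms add up to `36 a e (bc - 3ae)`, and `e (bc - 3ae)` is even.
  have hev : Even (e * (b * c - 3 * a * e)) := by
    rcases Int.even_or_odd e with he | he
    · exact he.mul_right _
    · exact ((hb.mul hc).sub_odd (((by decide : Odd (3 : ℤ)).mul ha).mul he)).mul_left _
  obtain ⟨r, hr⟩ := hev
  exact ⟨k - m - 1 - b ^ 3 * e + 9 * a * r,
    by linear_combination hk - 4 * hm + 36 * a * hr⟩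

theorem stmt_7 (a b c d t : ℤ) (ha : Odd a) (hbcd : Odd (b * c + d)) (ht : t ≠ 0)
    (hv : padicValInt 2 t = 1)
    (hirr : Irreducible (C (a : ℚ) * X ^ 3 + C (b : ℚ) * X ^ 2 + C (c : ℚ) * X
      + C ((d : ℚ) + t)))
    (hsq : ∃ s : ℤ, b ^ 2 * c ^ 2 - 4 * a * c ^ 3 - 4 * b ^ 3 * (d + t)
      - 27 * a ^ 2 * (d + t) ^ 2 + 18 * a * b * c * (d + t) = s ^ 2) :
    ¬ ∃ x y : ℤ, a * x ^ 3 + b * x ^ 2 + c * x + d = t * y ^ 2 := by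
  rintro ⟨x, y, hxy⟩
  obtain ⟨s, hs⟩ := hsq
  have htev : Even t := by
    have h := (padicValInt_dvd_iff (p := 2) 1 t).2 (Or.inr hv.ge)
    exact even_iff_two_dvd.2 (by simpa using h)
  have hpar : Even (a * x ^ 3 + b * x ^ 2 + c * x + d) := hxy ▸ htev.mul_right _
  have hbc : (Even b ∧ Even c ∧ Odd d) ∨ (Odd b ∧ Odd c ∧ Even d) := by
    simp only [← Int.not_even_iff_odd, Int.even_add, Int.even_mul,
      Int.even_pow' (n := 3) (by norm_num), Int.even_pow' (n := 2) (by norm_num)] at *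
    tauto
  rcases hbc with ⟨hb, hc, hd⟩ | ⟨hb, hc, hd⟩
  · obtain ⟨k, hk⟩ := disc_of_even ha (hd.add_even htev) hb hc
    exact sq_ne_five_mod_eight s k (hs ▸ hk)
  · obtain ⟨k, hk⟩ := disc_of_odd ha (hd.add htev) hb hc
    exact sq_ne_five_mod_eight s k (hs ▸ hk)
end
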